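/- Let H ⊆ B be a subspace, and for each i set k_i = dim(pr_i H) and assume dim(pr_i H ∩ (pr_i H)^{⊥_i}) = k_i − r_i for given integers r_i. Then there exists exactly one tuple of subspaces (P̃_i ⊆ B_i, P_i ⊆ B_{≤i}, H_i ⊆ B_{≤i})_{1 ≤ i ≤ m} satisfying, for all i: dim P̃_i = k_i − r_i; dim P_i = k₁ + ⋯ + k_{i−1} + k_i − r_i; dim H_i = k₁ + ⋯ + k_i; P̃_i ⊆ P̃_i^{⊥_i}; pr_i P_i ⊆ P̃_i; pr_i H_i ⊆ P̃_i^{⊥_i}; H_{i−1} ⊆ P_i ⊆ H_i (with H₀ = 0); and H_m = H. Namely, necessarily H_i = H ∩ B_{≤i}, P̃_i = pr_i H ∩ (pr_i H)^{⊥_i}, and P_i is the preimage of P̃_i under the projection H ∩ B_{≤i} → pr_i H. -/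

import Mathlib

open Module

/-- Left orthogonal complement `H^⊥ = {v | ⟨v,w⟩ = 0 for all w ∈ H}` of a subspace with
respect to a bilinear form. -/
def bperp {V : Type*} [AddCommGroup V] [Module ℂ V]
    (B : V →ₗ[ℂ] V →ₗ[ℂ] ℂ) (H : Submodule ℂ V) : Submodule ℂ V where
  carrier := {v | ∀ w ∈ H, B v w = 0}
  add_mem' := by
    intro a b ha hb w hw
    rw [map_add, LinearMap.add_apply, ha w hw, hb w hw, add_zero]
  zero_mem' := by
    intro w hw
    simp
  smul_mem' := by
    intro c a ha w hw
    rw [map_smul, LinearMap.smul_apply, ha w hw, smul_zero]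

/-- `B_{≤ i} = B₁ ⊕ ⋯ ⊕ B_i`, as a subspace of `B = B₁ ⊕ ⋯ ⊕ B_m` (modelled as the
product `∀ j, Bi j`): the vectors whose coordinates vanish beyond `i`. -/
def Ble {m : ℕ} (Bi : Fin m → Type*) [∀ i, AddCommGroup (Bi i)] [∀ i, Module ℂ (Bi i)]
    (i : Fin m) : Submodule ℂ (∀ j, Bi j) :=
  Submodule.pi (Set.Ioi i) (fun j => (⊥ : Submodule ℂ (Bi j)))

/-- `B_{< i} = B₁ ⊕ ⋯ ⊕ B_{i-1}`, as a subspace of `B = B₁ ⊕ ⋯ ⊕ B_m`: the vectors whose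
coordinates vanish from `i` on. -/
def Blt {m : ℕ} (Bi : Fin m → Type*) [∀ i, AddCommGroup (Bi i)] [∀ i, Module ℂ (Bi i)]
    (i : Fin m) : Submodule ℂ (∀ j, Bi j) :=
  Submodule.pi (Set.Ici i) (fun j => (⊥ : Submodule ℂ (Bi j)))

/-- `pr_i H ⊆ B_i`: the image of `H ∩ B_{≤ i}` under the projection `B_{≤ i} → B_i`
with kernel `B_{< i}` (in the product model, the `i`-th coordinate projection). -/
def prI {m : ℕ} (Bi : Fin m → Type*) [∀ i, AddCommGroup (Bi i)] [∀ i, Module ℂ (Bi i)]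
    (i : Fin m) (H : Submodule ℂ (∀ j, Bi j)) : Submodule ℂ (Bi i) :=
  Submodule.map (LinearMap.proj i : (∀ j, Bi j) →ₗ[ℂ] Bi i) (H ⊓ Ble Bi i)

/-- Membership in the group `Q_B`: a linear endomorphism `g` of `B = B₁ ⊕ ⋯ ⊕ B_m` lies in
`Q_B` if it is a linear automorphism and, for each `i`, there is an isometry `gi` of
`(B_i, ⟨-,-⟩_{B_i})` with `det gi = 1` such that `g v - gi v ∈ B_{< i}` for all `v ∈ B_i`. -/
def memQB {m : ℕ} (Bi : Fin m → Type*) [∀ i, AddCommGroup (Bi i)] [∀ i, Module ℂ (Bi i)]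
    (βi : ∀ i, Bi i →ₗ[ℂ] Bi i →ₗ[ℂ] ℂ)
    (g : (∀ j, Bi j) →ₗ[ℂ] (∀ j, Bi j)) : Prop :=
  Function.Bijective g ∧
  ∀ i, ∃ gi : Bi i ≃ₗ[ℂ] Bi i,
    (∀ x y, βi i (gi x) (gi y) = βi i x y) ∧
    LinearMap.det (gi : Bi i →ₗ[ℂ] Bi i) = 1 ∧
    ∀ v : ∀ j, Bi j, (∀ j, j ≠ i → v j = 0) →
      g v - Pi.single i (gi (v i)) ∈ Blt Bi i

/-!
Rank-nullity for the `i`-th coordinate on `H ∩ B_{≤i}`, whose kernel is `H ∩ B_{<i}`, gives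
`dim (H ∩ B_{≤i}) = k₁ + ⋯ + k_i`. The `H_i` form a chain ending at `H`, so
`H_i ⊆ H ∩ B_{≤i}`, with equality by dimension. What remains concerns a single linear map `f`, the
`i`-th coordinate, on a single space `K = H ∩ B_{≤i}`: `P_i` is contained in the preimage of `P̃_i`
in `K`, whose dimension is at most `dim P̃_i + dim (K ∩ ker f) = dim P_i`. So `P_i` is this
preimage, and no dimension is lost only if `P̃_i ⊆ f(K)`. As `f(K) ⊆ P̃_i^⊥` and orthogonality is
symmetric, `P̃_i` lies in the radical of `f(K)`, and again the dimensions agree.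
-/

section RankNullity

variable {K V W : Type*} [DivisionRing K] [AddCommGroup V] [Module K V] [AddCommGroup W]
  [Module K W] (f : V →ₗ[K] W)

lemma finrank_map_add_finrank_inf_ker (S : Submodule K V) [FiniteDimensional K S] :
    finrank K (S.map f) + finrank K ↥(S ⊓ LinearMap.ker f) = finrank K S := by
  rw [← LinearMap.finrank_range_add_finrank_ker (f.domRestrict S), LinearMap.range_domRestrict,
    LinearMap.ker_domRestrict, ← Submodule.map_comap_subtype, Submodule.finrank_map_subtype_eq]

lemma finrank_inf_comap_add_finrank_map (S : Submodule K V) [FiniteDimensional K S]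
    (T : Submodule K W) :
    finrank K ↥(S ⊓ T.comap f) + finrank K (S.map f) =
      finrank K ↥(S.map f ⊓ T) + finrank K S := by
  have hmap : (S ⊓ T.comap f).map f = S.map f ⊓ T := Submodule.map_inf_eq_map_inf_comap.symm
  have hker : S ⊓ T.comap f ⊓ LinearMap.ker f = S ⊓ LinearMap.ker f := by
    rw [inf_assoc, inf_eq_right.2 (LinearMap.ker_le_comap f)]
  rw [← finrank_map_add_finrank_inf_ker f (S ⊓ T.comap f), hmap, hker,
    ← finrank_map_add_finrank_inf_ker f S]
  lia

variable {f} {P S : Submodule K V} {T : Submodule K W} [FiniteDimensional K S]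
  [FiniteDimensional K T]

lemma eq_inf_comap_of_finrank_add_le (hPS : P ≤ S) (hPT : P.map f ≤ T)
    (hdim : finrank K T + finrank K S ≤ finrank K P + finrank K (S.map f)) :
    P = S ⊓ T.comap f := by
  refine Submodule.eq_of_le_of_finrank_le (le_inf hPS (Submodule.map_le_iff_le_comap.1 hPT)) ?_
  have hinf : finrank K ↥(S.map f ⊓ T) ≤ finrank K T := Submodule.finrank_mono inf_le_right
  have hcomap := finrank_inf_comap_add_finrank_map f S T
  lia

lemma le_map_of_finrank_add_le (hPS : P ≤ S) (hPT : P.map f ≤ T)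
    (hdim : finrank K T + finrank K S ≤ finrank K P + finrank K (S.map f)) :
    T ≤ S.map f := by
  rw [eq_inf_comap_of_finrank_add_le hPS hPT hdim, finrank_inf_comap_add_finrank_map] at hdim
  exact inf_eq_right.1 <|
    Submodule.eq_of_le_of_finrank_le inf_le_right (Nat.le_of_add_le_add_right hdim)

end RankNullity

section Orthogonality

variable {R M : Type*} [CommRing R] [AddCommGroup M] [Module R M] {B : LinearMap.BilinForm R M}

lemma isRefl_of_symm_or_skew (hB : (∀ x y, B x y = B y x) ∨ (∀ x y, B x y = -B y x)) :
    B.IsRefl := by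
  intro x y hxy
  rcases hB with hsymm | hskew
  · rw [hsymm, hxy]
  · rw [hskew, hxy, neg_zero]

lemma le_orthogonalBilin_comm (hB : B.IsRefl) {S T : Submodule R M} :
    S ≤ T.orthogonalBilin B ↔ T ≤ S.orthogonalBilin B :=
  ⟨fun h _ ht _ hs => hB _ _ (h hs _ ht), fun h _ hs _ ht => hB _ _ (h ht _ hs)⟩

/-- The radical `S ∩ S^⊥` of the restriction of a bilinear form to a subspace `S`. The complement
`S^⊥ = {y | B x y = 0 for all x ∈ S}` is the right one, as in `Submodule.orthogonalBilin`. -/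
def formRadical (B : LinearMap.BilinForm R M) (S : Submodule R M) : Submodule R M :=
  S ⊓ S.orthogonalBilin B

lemma formRadical_le (B : LinearMap.BilinForm R M) (S : Submodule R M) : formRadical B S ≤ S :=
  inf_le_left

lemma formRadical_le_orthogonalBilin_self (B : LinearMap.BilinForm R M) (S : Submodule R M) :
    formRadical B S ≤ (formRadical B S).orthogonalBilin B :=
  inf_le_right.trans (Submodule.orthogonalBilin_le (formRadical_le B S))

lemma le_orthogonalBilin_formRadical (hB : B.IsRefl) (S : Submodule R M) :
    S ≤ (formRadical B S).orthogonalBilin B :=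
  (le_orthogonalBilin_comm hB).1 inf_le_right

end Orthogonality

section Radical

variable {K V W : Type*} [Field K] [AddCommGroup V] [Module K V] [AddCommGroup W] [Module K W]

lemma finrank_inf_comap_formRadical_add_finrank_map (B : LinearMap.BilinForm K W) (f : V →ₗ[K] W)
    (S : Submodule K V) [FiniteDimensional K S] :
    finrank K ↥(S ⊓ (formRadical B (S.map f)).comap f) + finrank K (S.map f) =
      finrank K (formRadical B (S.map f)) + finrank K S := by
  rw [finrank_inf_comap_add_finrank_map, inf_eq_right.2 (formRadical_le B _)]

theorem eq_formRadical_and_eq_inf_comap {B : LinearMap.BilinForm K W} (hB : B.IsRefl)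
    {f : V →ₗ[K] W} {P S : Submodule K V} {T : Submodule K W} [FiniteDimensional K S]
    [FiniteDimensional K T] (hPS : P ≤ S) (hPT : P.map f ≤ T)
    (hST : S.map f ≤ T.orthogonalBilin B)
    (hdimT : finrank K T = finrank K (formRadical B (S.map f)))
    (hdimP : finrank K P + finrank K (S.map f) = finrank K T + finrank K S) :
    T = formRadical B (S.map f) ∧ P = S ⊓ (formRadical B (S.map f)).comap f := by
  have : FiniteDimensional K (formRadical B (S.map f)) := Submodule.finiteDimensional_inf_left _ _
  have hT : T = formRadical B (S.map f) :=
    Submodule.eq_of_le_of_finrank_eq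
      (le_inf (le_map_of_finrank_add_le hPS hPT hdimP.ge) ((le_orthogonalBilin_comm hB).1 hST))
      hdimT
  exact ⟨hT, hT ▸ eq_inf_comap_of_finrank_add_le hPS hPT hdimP.ge⟩

end Radical

section Flag

section Preorder

variable {ι : Type*} [Preorder ι] (R : Type*) [Ring R] (E : ι → Type*) [∀ i, AddCommGroup (E i)]
  [∀ i, Module R (E i)]

/-- The step `E_{≤ i}` of the coordinate flag of a product `∀ j, E j`: the vectors whose
coordinates vanish beyond `i`. -/
def flagLE (i : ι) : Submodule R (∀ j, E j) :=
  Submodule.pi (Set.Ioi i) fun _ => ⊥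

/-- The step `E_{< i}` of the coordinate flag of a product `∀ j, E j`: the vectors whose
coordinates vanish from `i` on. -/
def flagLT (i : ι) : Submodule R (∀ j, E j) :=
  Submodule.pi (Set.Ici i) fun _ => ⊥

variable {R E} in
/-- The subspace `pr_i H` of `E i` which `H` induces on the `i`-th graded piece
`E_{≤ i} / E_{< i}` of the coordinate flag. -/
def gradedPart (i : ι) (H : Submodule R (∀ j, E j)) : Submodule R (E i) :=
  (H ⊓ flagLE R E i).map (LinearMap.proj i)

lemma flagLT_eq_bot_of_isBot {i : ι} (hi : IsBot i) : flagLT R E i = ⊥ := by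
  rw [flagLT, hi.Ici_eq, Submodule.pi_univ_bot]

lemma flagLE_eq_top_of_isTop {i : ι} (hi : IsTop i) : flagLE R E i = ⊤ := by
  rw [flagLE, hi.isMax.Ioi_eq, Submodule.pi_empty]

end Preorder

lemma inf_flagLE_inf_ker_proj {ι R : Type*} [PartialOrder ι] [Ring R] {E : ι → Type*}
    [∀ i, AddCommGroup (E i)] [∀ i, Module R (E i)] (H : Submodule R (∀ j, E j)) (i : ι) :
    H ⊓ flagLE R E i ⊓ LinearMap.ker (LinearMap.proj i : (∀ j, E j) →ₗ[R] E i) =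
      H ⊓ flagLT R E i := by
  ext v
  simp only [flagLE, flagLT, Submodule.mem_inf, Submodule.mem_pi, Submodule.mem_bot,
    LinearMap.mem_ker, LinearMap.proj_apply, ← Set.Ioi_insert, Set.forall_mem_insert]
  tauto

lemma flagLT_eq_flagLE_of_covBy {ι : Type*} [LinearOrder ι] (R : Type*) [Ring R]
    (E : ι → Type*) [∀ i, AddCommGroup (E i)] [∀ i, Module R (E i)] {i j : ι} (h : j ⋖ i) :
    flagLT R E i = flagLE R E j := by
  rw [flagLT, flagLE, h.Ioi_eq]

lemma finrank_gradedPart_add_finrank_inf_flagLT {ι K : Type*} [PartialOrder ι] [DivisionRing K]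
    {E : ι → Type*} [∀ i, AddCommGroup (E i)] [∀ i, Module K (E i)]
    (H : Submodule K (∀ j, E j)) [FiniteDimensional K H] (i : ι) :
    finrank K (gradedPart i H) + finrank K ↥(H ⊓ flagLT K E i) =
      finrank K ↥(H ⊓ flagLE K E i) := by
  rw [← inf_flagLE_inf_ker_proj, gradedPart, finrank_map_add_finrank_inf_ker]

lemma finrank_inf_flagLE {ι K : Type*} [LinearOrder ι] [Finite ι] [LocallyFiniteOrderBot ι]
    [DivisionRing K] {E : ι → Type*} [∀ i, AddCommGroup (E i)] [∀ i, Module K (E i)]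
    (H : Submodule K (∀ j, E j)) [FiniteDimensional K H] (i : ι) :
    finrank K ↥(H ⊓ flagLE K E i) = ∑ j ∈ Finset.Iic i, finrank K (gradedPart j H) := by
  induction i using WellFoundedLT.induction with
  | ind i ih =>
    rw [← finrank_gradedPart_add_finrank_inf_flagLT, ← Finset.Iio_insert,
      Finset.sum_insert (by simp)]
    congr 1
    by_cases hi : IsMin i
    · rw [flagLT_eq_bot_of_isBot K E hi.isBot, inf_bot_eq, finrank_bot,
        Finset.Iio_eq_empty.2 hi, Finset.sum_empty]
    · obtain ⟨j, hji⟩ := exists_covBy_of_wellFoundedGT hi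
      have hIio : Finset.Iio i = Finset.Iic j := by
        rw [← Finset.coe_inj, Finset.coe_Iio, Finset.coe_Iic, hji.Iio_eq]
      rw [flagLT_eq_flagLE_of_covBy K E hji, ih j hji.lt, hIio]

end Flag

theorem stmt_13_general {𝕜 : Type*} [Field 𝕜] {m : ℕ} (hm : 0 < m) (E : Fin m → Type*)
    [∀ i, AddCommGroup (E i)] [∀ i, Module 𝕜 (E i)] [∀ i, FiniteDimensional 𝕜 (E i)]
    (β : ∀ i, LinearMap.BilinForm 𝕜 (E i)) (hβ : ∀ i, (β i).IsRefl)
    (H : Submodule 𝕜 (∀ j, E j))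
    (k : Fin m → ℕ) (hk : ∀ i, k i = finrank 𝕜 (gradedPart i H))
    (r : Fin m → ℤ)
    (hr : ∀ i, (finrank 𝕜 (formRadical (β i) (gradedPart i H)) : ℤ) = k i - r i)
    (Pt : ∀ i, Submodule 𝕜 (E i)) (P Hs : Fin m → Submodule 𝕜 (∀ j, E j)) :
    ((∀ i,
        (finrank 𝕜 (Pt i) : ℤ) = k i - r i ∧
        P i ≤ flagLE 𝕜 E i ∧
        Hs i ≤ flagLE 𝕜 E i ∧
        (finrank 𝕜 (P i) : ℤ) = (∑ j ∈ Finset.Iic i, (k j : ℤ)) - r i ∧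
        (finrank 𝕜 (Hs i) : ℤ) = ∑ j ∈ Finset.Iic i, (k j : ℤ) ∧
        Pt i ≤ (Pt i).orthogonalBilin (β i) ∧
        (P i).map (LinearMap.proj i) ≤ Pt i ∧
        (Hs i).map (LinearMap.proj i) ≤ (Pt i).orthogonalBilin (β i) ∧
        P i ≤ Hs i) ∧
      (∀ i j : Fin m, (j : ℕ) + 1 = i → Hs j ≤ P i) ∧
      Hs ⟨m - 1, by lia⟩ = H) ↔
    ∀ i,
      Hs i = H ⊓ flagLE 𝕜 E i ∧
      Pt i = formRadical (β i) (gradedPart i H) ∧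
      P i = H ⊓ flagLE 𝕜 E i ⊓
        (formRadical (β i) (gradedPart i H)).comap (LinearMap.proj i) := by
  have hcovBy {i j : Fin m} : (j : ℕ) + 1 = i ↔ j ⋖ i := by
    rw [Fin.covBy_iff, Nat.covBy_iff_add_one_eq]
  have htop : IsTop (⟨m - 1, by lia⟩ : Fin m) := fun i => Nat.le_sub_one_of_lt i.2
  have hdimLE (i : Fin m) :
      (finrank 𝕜 ↥(H ⊓ flagLE 𝕜 E i) : ℤ) = ∑ j ∈ Finset.Iic i, (k j : ℤ) := by
    simp only [finrank_inf_flagLE, Nat.cast_sum, hk]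
  unfold gradedPart at hk hr ⊢
  constructor
  · rintro ⟨hcond, hchain, hlast⟩ i
    have hmono : Monotone Hs := (monotone_iff_forall_covBy Hs).2 fun j i hji =>
      (hchain i j (hcovBy.2 hji)).trans (hcond i).2.2.2.2.2.2.2.2
    obtain ⟨hdimPt, -, hHsLE, hdimP, hdimHs, -, hPPt, hHsPt, hPHs⟩ := hcond i
    have hHs : Hs i = H ⊓ flagLE 𝕜 E i :=
      Submodule.eq_of_le_of_finrank_eq (le_inf ((hmono (htop i)).trans_eq hlast) hHsLE)
        (by exact_mod_cast hdimHs.trans (hdimLE i).symm)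
    rw [hHs] at hPHs hHsPt
    exact ⟨hHs, eq_formRadical_and_eq_inf_comap (hβ i) hPHs hPPt hHsPt
      (by exact_mod_cast hdimPt.trans (hr i).symm) (by have := hk i; have := hdimLE i; lia)⟩
  · intro h
    refine ⟨fun i => ?_, fun i j hji => ?_, ?_⟩
    · obtain ⟨hHs, hPt, hP⟩ := h i
      have hdimP := finrank_inf_comap_formRadical_add_finrank_map (β i)
        (LinearMap.proj i) (H ⊓ flagLE 𝕜 E i)
      rw [hHs, hPt, hP]
      exact ⟨hr i, inf_le_left.trans inf_le_right, inf_le_right,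
        by have := hk i; have := hr i; have := hdimLE i; lia, hdimLE i,
        formRadical_le_orthogonalBilin_self _ _, Submodule.map_le_iff_le_comap.2 inf_le_right,
        le_orthogonalBilin_formRadical (hβ i) _, inf_le_left⟩
    · rw [(h j).1, (h i).2.2, ← flagLT_eq_flagLE_of_covBy 𝕜 E (hcovBy.1 hji),
        ← inf_flagLE_inf_ker_proj]
      exact inf_le_inf_left _ (LinearMap.ker_le_comap _)
    · rw [(h _).1, flagLE_eq_top_of_isTop 𝕜 E htop, inf_top_eq]

/-- Proposition 6.2 and Remark 6.3 (`prop:xkr-image`, `rmk:xkr-inverse`): over a point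
`H ∈ 𝒪_{k,r}`, the fiber data `(P̃_i, P_i, H_i)` of the resolution `X(k,r)` is unique;
namely, a tuple satisfies the defining conditions of `X(k,r)` together with `H_m = H` if and
only if `H_i = H ∩ B_{≤i}`, `P̃_i = pr_i H ∩ (pr_i H)^⊥` (the radical of `pr_i H`), and
`P_i` is the preimage of `P̃_i` under the projection `H ∩ B_{≤i} → pr_i H`. -/
theorem stmt_13 {m : ℕ} (hm : 0 < m) (Bi : Fin m → Type*)
    [∀ i, AddCommGroup (Bi i)] [∀ i, Module ℂ (Bi i)]
    [∀ i, FiniteDimensional ℂ (Bi i)] [∀ i, Nontrivial (Bi i)]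
    (βi : ∀ i, Bi i →ₗ[ℂ] Bi i →ₗ[ℂ] ℂ)
    (hnd : ∀ i, ∀ v, (∀ w, βi i v w = 0) → v = 0)
    (hrefl : ∀ i, (∀ v w, βi i v w = βi i w v) ∨ (∀ v w, βi i v w = - βi i w v))
    (H : Submodule ℂ (∀ j, Bi j))
    (k : Fin m → ℕ) (hk : ∀ i, k i = finrank ℂ ↥(prI Bi i H))
    (r : Fin m → ℤ)
    (hr : ∀ i, (finrank ℂ ↥(prI Bi i H ⊓ bperp (βi i) (prI Bi i H)) : ℤ) =
      (k i : ℤ) - r i)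
    (Pt : ∀ i, Submodule ℂ (Bi i)) (P Hs : ∀ i, Submodule ℂ (∀ j, Bi j)) :
    ((∀ i,
        (finrank ℂ ↥(Pt i) : ℤ) = (k i : ℤ) - r i ∧
        P i ≤ Ble Bi i ∧
        Hs i ≤ Ble Bi i ∧
        (finrank ℂ ↥(P i) : ℤ) = (∑ j ∈ Finset.Iic i, (k j : ℤ)) - r i ∧
        (finrank ℂ ↥(Hs i) : ℤ) = ∑ j ∈ Finset.Iic i, (k j : ℤ) ∧
        Pt i ≤ bperp (βi i) (Pt i) ∧
        Submodule.map (LinearMap.proj i : (∀ j, Bi j) →ₗ[ℂ] Bi i) (P i) ≤ Pt i ∧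
        Submodule.map (LinearMap.proj i : (∀ j, Bi j) →ₗ[ℂ] Bi i) (Hs i) ≤
          bperp (βi i) (Pt i) ∧
        P i ≤ Hs i) ∧
      (∀ i j : Fin m, (j : ℕ) + 1 = (i : ℕ) → Hs j ≤ P i) ∧
      Hs ⟨m - 1, by omega⟩ = H) ↔
    (∀ i,
      Hs i = H ⊓ Ble Bi i ∧
      Pt i = prI Bi i H ⊓ bperp (βi i) (prI Bi i H) ∧
      P i = (H ⊓ Ble Bi i) ⊓
        Submodule.comap (LinearMap.proj i : (∀ j, Bi j) →ₗ[ℂ] Bi i)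
          (prI Bi i H ⊓ bperp (βi i) (prI Bi i H))) :=
  -- `bperp` is the left complement and `orthogonalBilin` the right one, hence the `flip`.
  stmt_13_general hm Bi (fun i => (βi i).flip)
    (fun i => LinearMap.IsRefl.flip_isRefl_iff.2 (isRefl_of_symm_or_skew (hrefl i)))
    H k hk r hr Pt P Hs
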